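/- arXiv:2207.14035 — 3 statements merged into one kernel-verified Lean document; each statement's English description precedes it below -/
import Mathlib

section
/- Let A and Â be divisible abelian groups such that for every positive integer m the m-torsion subgroups satisfy A[m] ≅ (ℤ/mℤ)⁴ and Â[m] ≅ (ℤ/mℤ)⁴. Let φ_l : A → Â and φ_m : Â → A be group homomorphisms, let r, s, n be integers with n ≥ 1, set χ := n + r·s, and assume φ_m ∘ φ_l equals multiplication by −χ on A and φ_l ∘ φ_m equals multiplication by −χ on Â. Assume further that either (i) χ = 0, φ_l = 0, φ_m = 0, r > 0, s < 0 and gcd(r,s) = 1, or (ii) χ > 0 and there exist positive integers n₁ ∣ n₂ with n₁·n₂ = χ such that ker φ_l ≅ ker φ_m ≅ (ℤ/n₁ℤ)² × (ℤ/n₂ℤ)², and no prime divides all three of r, s, n₁. Then the subgroup G := {(x,y) ∈ A × Â : φ_l(x) = −r·y and φ_m(y) = s·x} is isomorphic to (ℤ/nℤ)⁴. -/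
def torsionSub (m : ℤ) (A : Type*) [AddCommGroup A] : AddSubgroup A where
  carrier := {a | m • a = 0}
  zero_mem' := smul_zero m
  add_mem' := by
    intro a b ha hb
    simp only [Set.mem_setOf_eq, smul_add] at *
    rw [ha, hb, add_zero]
  neg_mem' := by
    intro a ha
    simp only [Set.mem_setOf_eq, smul_neg] at *
    rw [ha, neg_zero]

def solSub {A Ahat : Type*} [AddCommGroup A] [AddCommGroup Ahat]
    (φl : A →+ Ahat) (φm : Ahat →+ A) (r s : ℤ) : AddSubgroup (A × Ahat) where
  carrier := {p | φl p.1 = -(r • p.2) ∧ φm p.2 = s • p.1}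
  zero_mem' := ⟨by simp, by simp⟩
  add_mem' := by
    rintro p q ⟨hp1, hp2⟩ ⟨hq1, hq2⟩
    refine ⟨?_, ?_⟩
    · show φl (p.1 + q.1) = -(r • (p.2 + q.2))
      rw [map_add, hp1, hq1, smul_add, neg_add]
    · show φm (p.2 + q.2) = s • (p.1 + q.1)
      rw [map_add, hp2, hq2, smul_add]
  neg_mem' := by
    rintro p ⟨hp1, hp2⟩
    refine ⟨?_, ?_⟩
    · show φl (-p.1) = -(r • (-p.2))
      rw [map_neg, hp1, smul_neg, neg_neg]
    · show φm (-p.2) = s • (-p.1)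
      rw [map_neg, hp2, smul_neg]

/-!
The subgroup `G = solSub φl φm r s` is the kernel of the matrix `M = (φl, r; s, -φm)` acting on
`A × Ahat`, and the relations `φm ∘ φl = -(n + rs)`, `φl ∘ φm = -(n + rs)` say that `M` followed by
`M' = (φm, r; s, -φl)` is multiplication by `-n`. By `n`-divisibility `M` is surjective, so
`|G| * |ker M'| = |(A × Ahat)[n]| = n ^ (2 * d)` when `A[n]` and `Ahat[n]` are both `(ℤ/n) ^ d`.
Both kernels are killed by `n`, and their `p`-torsion has at most `p ^ d` elements: it embeds into
`A[p]` or `Ahat[p]` unless `p` divides both `r` and `s`, in which case it lies in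
`(ker φl)[p] × (ker φm)[p]`. So each kernel is a quotient of `(ℤ/n) ^ d`, and the order count forces
equality.
-/

section Torsion

open AddSubgroup (torsionBy)

variable {G H : Type*} [AddCommGroup G] [AddCommGroup H]

lemma ker_nsmulAddMonoidHom (G : Type*) [AddCommGroup G] (m : ℕ) :
    (nsmulAddMonoidHom m : G →+ G).ker = torsionBy G m :=
  AddSubgroup.ext fun _ => AddSubgroup.torsionBy.nsmul_iff.symm

lemma card_torsionBy_congr (e : G ≃+ H) (m : ℤ) :
    Nat.card (torsionBy G m) = Nat.card (torsionBy H m) :=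
  Nat.card_congr <| e.toEquiv.subtypeEquiv fun x => by simp [← map_zsmul]

lemma torsionBy_prod (G H : Type*) [AddCommGroup G] [AddCommGroup H] (m : ℤ) :
    torsionBy (G × H) m = (torsionBy G m).prod (torsionBy H m) := by
  ext x
  simp [AddSubgroup.mem_prod, Prod.ext_iff]

lemma card_torsionBy_prod (G H : Type*) [AddCommGroup G] [AddCommGroup H] (m : ℤ) :
    Nat.card (torsionBy (G × H) m) = Nat.card (torsionBy G m) * Nat.card (torsionBy H m) := by
  rw [torsionBy_prod, Nat.card_congr (AddSubgroup.prodEquiv _ _).toEquiv, Nat.card_prod]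

lemma card_torsionBy_pi (ι G : Type*) [Finite ι] [AddCommGroup G] (m : ℤ) :
    Nat.card (torsionBy (ι → G) m) = Nat.card (torsionBy G m) ^ Nat.card ι := by
  rw [← Nat.card_fun]
  exact Nat.card_congr <| (Equiv.subtypeEquivRight fun x => by simp [funext_iff]).trans
    Equiv.subtypePiEquivPi

lemma card_torsionBy_zmod (m k : ℕ) [NeZero m] : Nat.card (torsionBy (ZMod m) k) = m.gcd k := by
  rw [← ker_nsmulAddMonoidHom, IsAddCyclic.card_nsmulAddMonoidHom_ker, Nat.card_zmod]

lemma card_torsionBy_le_pow_of_not_dvd {c d n₁ n₂ p : ℕ} [NeZero n₁] [NeZero n₂]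
    (e : G ≃+ (Fin c → ZMod n₁) × (Fin d → ZMod n₂)) (hp : p.Prime) (hpn₁ : ¬ p ∣ n₁) :
    Nat.card (torsionBy G p) ≤ p ^ d := by
  have hgcd : n₁.gcd p = 1 := (hp.coprime_iff_not_dvd.2 hpn₁).symm
  rw [card_torsionBy_congr e, card_torsionBy_prod, card_torsionBy_pi, card_torsionBy_pi,
    card_torsionBy_zmod, card_torsionBy_zmod, Nat.card_fin, Nat.card_fin, hgcd, one_pow, one_mul]
  exact Nat.pow_le_pow_left (Nat.gcd_le_right n₂ hp.pos) d

lemma card_torsionBy_of_dvd {d k n : ℕ} [NeZero n] (e : torsionBy G n ≃+ (Fin d → ZMod n))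
    (hk : k ∣ n) : Nat.card (torsionBy G k) = k ^ d := by
  have hle : torsionBy G k ≤ torsionBy G n :=
    Submodule.torsionBy_le_torsionBy_of_dvd _ _ (Int.natCast_dvd_natCast.2 hk)
  have hsub : torsionBy (torsionBy G n) k = (torsionBy G k).addSubgroupOf (torsionBy G n) := by
    ext x
    simp [AddSubgroup.mem_addSubgroupOf, Subtype.ext_iff]
  calc Nat.card (torsionBy G k) = Nat.card (torsionBy (torsionBy G n) k) := by
        rw [hsub, Nat.card_congr (AddSubgroup.addSubgroupOfEquivOfLe hle).toEquiv]
    _ = k ^ d := by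
        rw [card_torsionBy_congr e, card_torsionBy_pi, card_torsionBy_zmod, Nat.gcd_eq_right hk,
          Nat.card_fin]

lemma card_torsionBy_le_of_injective {m : ℤ} (f : torsionBy G m →+ H)
    (hf : Function.Injective f) [Finite (torsionBy H m)] :
    Nat.card (torsionBy G m) ≤ Nat.card (torsionBy H m) := by
  have hmem (x : torsionBy G m) : f x ∈ torsionBy H m := by
    have hx : m • x = 0 := Subtype.ext x.2
    rw [Submodule.mem_toAddSubgroup, Submodule.mem_torsionBy_iff, ← map_zsmul, hx, map_zero]
  exact Nat.card_le_card_of_injective (f.codRestrict _ hmem)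
    fun x y hxy => hf (congrArg Subtype.val hxy)

instance finite_torsionBy_subgroup (K : AddSubgroup G) (m : ℤ) [Finite (torsionBy G m)] :
    Finite (torsionBy K m) :=
  Finite.of_injective (fun x => (⟨x.1, congrArg Subtype.val x.2⟩ : torsionBy G m)) fun _ _ hxy =>
    Subtype.ext (Subtype.ext (congrArg (fun z : torsionBy G m => (z : G)) hxy))

instance finite_torsionBy_prod (m : ℤ) [Finite (torsionBy G m)] [Finite (torsionBy H m)] :
    Finite (torsionBy (G × H) m) := by
  rw [torsionBy_prod]
  exact Finite.of_equiv _ (AddSubgroup.prodEquiv _ _).symm.toEquiv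

lemma card_torsionBy_subgroup_le (K : AddSubgroup G) (m : ℤ) [Finite (torsionBy G m)] :
    Nat.card (torsionBy K m) ≤ Nat.card (torsionBy G m) :=
  card_torsionBy_le_of_injective (K.subtype.comp (torsionBy K m).subtype)
    (K.subtype_injective.comp (torsionBy K m).subtype_injective)

lemma card_ker_comp {B C D : Type*} [AddCommGroup B] [AddCommGroup C] [AddCommGroup D]
    (g : C →+ D) {f : B →+ C} (hf : Function.Surjective f) :
    Nat.card (g.comp f).ker = Nat.card f.ker * Nat.card g.ker := by
  have hle : f.ker ≤ (g.comp f).ker := by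
    rw [← AddMonoidHom.comap_ker]
    exact AddMonoidHom.ker_le_comap _ _
  have hmap : (g.comp f).ker.map f = g.ker := by
    rw [← AddMonoidHom.comap_ker, AddSubgroup.map_comap_eq_self_of_surjective hf]
  rw [← hmap, ← AddSubgroup.relIndex_ker, ← AddSubgroup.relIndex_bot_left,
    ← AddSubgroup.relIndex_bot_left, AddSubgroup.relIndex_mul_relIndex _ _ _ bot_le hle]

end Torsion

section Generators

open AddSubgroup (torsionBy closure)

variable {G : Type*} [AddCommGroup G]

lemma span_zmod_eq_top_iff {n : ℕ} [Module (ZMod n) G] {s : Set G} :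
    Submodule.span (ZMod n) s = ⊤ ↔ closure s = ⊤ := by
  rw [← Submodule.restrictScalars_eq_top_iff ℤ,
    Submodule.restrictScalars_span ℤ (ZMod n) ZMod.intCast_surjective,
    ← Submodule.span_int_eq_addSubgroupClosure]
  exact Submodule.toAddSubgroup_injective.eq_iff.symm

lemma exists_span_range_eq_top {K V : Type*} [DivisionRing K] [AddCommGroup V] [Module K V]
    [Module.Finite K V] {d : ℕ} (hd : Module.finrank K V ≤ d) :
    ∃ g : Fin d → V, Submodule.span K (Set.range g) = ⊤ := by
  rw [← Module.finrank_fin_fun K (n := d), finrank_le_iff_exists_linearMap] at hd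
  obtain ⟨i, hi⟩ := hd
  obtain ⟨f, hf⟩ := i.exists_leftInverse_of_injective (LinearMap.ker_eq_bot.2 hi)
  refine ⟨f ∘ Pi.basisFun K (Fin d), ?_⟩
  rw [Set.range_comp, Submodule.span_image, Module.Basis.span_eq, Submodule.map_top]
  exact LinearMap.range_eq_top.2 (LinearMap.surjective_of_comp_eq_id _ _ hf)

lemma exists_closure_range_eq_top_of_card_le [Finite G] {p d : ℕ} (hp : p.Prime)
    (hG : ∀ x : G, p • x = 0) (hcard : Nat.card G ≤ p ^ d) :
    ∃ g : Fin d → G, closure (Set.range g) = ⊤ := by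
  have : Fact p.Prime := ⟨hp⟩
  have : Module (ZMod p) G := AddCommGroup.zmodModule hG
  have hrank : Module.finrank (ZMod p) G ≤ d := by
    rwa [← Nat.pow_le_pow_iff_right hp.one_lt, FiniteField.pow_finrank_eq_natCard]
  simpa only [span_zmod_eq_top_iff] using exists_span_range_eq_top hrank

lemma eq_top_of_sup_range_nsmul_eq_top {H : AddSubgroup G} {p k : ℕ}
    (hk : ∀ x : G, p ^ k • x = 0)
    (h : H ⊔ (nsmulAddMonoidHom p : G →+ G).range = ⊤) : H = ⊤ := by
  have hpow (j : ℕ) (x : G) : ∃ y ∈ H, ∃ z, y + p ^ j • z = x := by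
    induction j with
    | zero => exact ⟨0, H.zero_mem, x, by simp⟩
    | succ j ih =>
      obtain ⟨y, hy, z, rfl⟩ := ih
      obtain ⟨y', hy', _, ⟨z', rfl⟩, rfl⟩ := AddSubgroup.mem_sup.1 (h ▸ AddSubgroup.mem_top z)
      refine ⟨y + p ^ j • y', H.add_mem hy (H.nsmul_mem hy' _), z', ?_⟩
      rw [nsmulAddMonoidHom_apply, smul_add, smul_smul, pow_succ, add_assoc]
  refine (AddSubgroup.eq_top_iff' H).2 fun x => ?_
  obtain ⟨y, hy, z, rfl⟩ := hpow k x
  rwa [hk, add_zero]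

lemma exists_closure_range_eq_top_of_prime_pow [Finite G] {p k d : ℕ} (hp : p.Prime)
    (hk : ∀ x : G, p ^ k • x = 0) (hcard : Nat.card (torsionBy G p) ≤ p ^ d) :
    ∃ g : Fin d → G, closure (Set.range g) = ⊤ := by
  let pG := (nsmulAddMonoidHom p : G →+ G).range
  have hquot (y : G ⧸ pG) : p • y = 0 := by
    obtain ⟨x, rfl⟩ := QuotientAddGroup.mk'_surjective pG y
    exact (QuotientAddGroup.eq_zero_iff _).2 ⟨x, rfl⟩
  have hcardquot : Nat.card (G ⧸ pG) ≤ p ^ d := by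
    rwa [← AddSubgroup.index_eq_card, AddSubgroup.index_range, ker_nsmulAddMonoidHom]
  obtain ⟨h, hh⟩ := exists_closure_range_eq_top_of_card_le hp hquot hcardquot
  choose g hg using fun i => QuotientAddGroup.mk'_surjective pG (h i)
  refine ⟨g, eq_top_of_sup_range_nsmul_eq_top hk ?_⟩
  change closure (Set.range g) ⊔ pG = ⊤
  rw [← QuotientAddGroup.ker_mk' pG, ← AddSubgroup.comap_map_eq, AddMonoidHom.map_closure,
    ← Set.range_comp, funext (f := QuotientAddGroup.mk' pG ∘ g) hg, hh,
    AddSubgroup.comap_top]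

lemma torsionBy_le_closure_range_add {ι : Type*} {a b : ℤ} (hab : IsCoprime a b)
    {u : ι → torsionBy G a} (hu : closure (Set.range u) = ⊤) (v : ι → torsionBy G b) :
    torsionBy G a ≤ closure (Set.range fun i => (u i + v i : G)) := by
  obtain ⟨α, β, hαβ⟩ := hab
  have hmul (i : ι) : (β * b) • (u i + v i : G) = u i := by
    have hua : a • (u i : G) = 0 := (u i).2
    have hvb : b • (v i : G) = 0 := (v i).2
    rw [smul_add, mul_smul β b (v i : G), hvb, smul_zero, add_zero, eq_sub_of_add_eq' hαβ,
      sub_smul, mul_smul, hua, smul_zero, one_smul, sub_zero]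
  calc torsionBy G a = (closure (Set.range u)).map (torsionBy G a).subtype := by
        rw [hu, ← AddMonoidHom.range_eq_map, AddSubgroup.range_subtype]
    _ ≤ closure (Set.range fun i => (u i + v i : G)) := by
        rw [AddMonoidHom.map_closure, AddSubgroup.closure_le]
        rintro _ ⟨_, ⟨i, rfl⟩, rfl⟩
        rw [AddSubgroup.coe_subtype, SetLike.mem_coe, ← hmul i]
        exact AddSubgroup.zsmul_mem _ (AddSubgroup.subset_closure (Set.mem_range_self i)) _

lemma torsionBy_sup_torsionBy {a b : ℤ} (hab : IsCoprime a b) :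
    torsionBy G a ⊔ torsionBy G b = torsionBy G (a * b) := by
  refine le_antisymm (sup_le ?_ ?_) fun x hx => ?_
  · exact Submodule.torsionBy_le_torsionBy_of_dvd _ _ (dvd_mul_right a b)
  · exact Submodule.torsionBy_le_torsionBy_of_dvd _ _ (dvd_mul_left b a)
  · obtain ⟨α, β, hαβ⟩ := hab
    have hx0 : (a * b) • x = 0 := hx
    refine AddSubgroup.mem_sup.2 ⟨(β * b) • x, ?_, (α * a) • x, ?_, ?_⟩
    · change a • (β * b) • x = 0
      rw [smul_smul, mul_left_comm, mul_smul, hx0, smul_zero]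
    · change b • (α * a) • x = 0
      rw [smul_smul, mul_left_comm, mul_comm b, mul_smul, hx0, smul_zero]
    · rw [← add_smul, add_comm, hαβ, one_smul]

lemma exists_closure_range_eq_top {n d : ℕ} (hn : 0 < n) [Finite G] (hG : ∀ x : G, n • x = 0)
    (hcard : ∀ p : ℕ, p.Prime → p ∣ n → Nat.card (torsionBy G p) ≤ p ^ d) :
    ∃ g : Fin d → G, closure (Set.range g) = ⊤ := by
  induction n using Nat.recOnPosPrimePosCoprime generalizing G with
  | zero => exact absurd hn (lt_irrefl 0)
  | one =>
    have : Subsingleton G := ⟨fun x y => by rw [← one_nsmul x, hG, ← one_nsmul y, hG]⟩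
    exact ⟨0, Subsingleton.elim _ _⟩
  | prime_pow p k hp hk =>
    exact exists_closure_range_eq_top_of_prime_pow hp hG (hcard p hp (dvd_pow_self p hk.ne'))
  | coprime a b ha hb hab iha ihb =>
    obtain ⟨u, hu⟩ := iha (G := torsionBy G a) (by lia) AddSubgroup.torsionBy.nsmul fun p hp hpa =>
      (card_torsionBy_subgroup_le _ _).trans (hcard p hp (hpa.mul_right b))
    obtain ⟨v, hv⟩ := ihb (G := torsionBy G b) (by lia) AddSubgroup.torsionBy.nsmul fun p hp hpb =>
      (card_torsionBy_subgroup_le _ _).trans (hcard p hp (hpb.mul_left a))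
    have hab' : IsCoprime (a : ℤ) b := Nat.isCoprime_iff_coprime.2 hab
    have htop : torsionBy G a ⊔ torsionBy G b = ⊤ := by
      rw [torsionBy_sup_torsionBy hab', ← Nat.cast_mul]
      exact (AddSubgroup.eq_top_iff' _).2 fun x => AddSubgroup.torsionBy.nsmul_iff.2 (hG x)
    refine ⟨fun i => u i + v i, top_le_iff.1 (htop ▸ sup_le ?_ ?_)⟩
    · exact torsionBy_le_closure_range_add hab' hu v
    · simpa only [add_comm] using torsionBy_le_closure_range_add hab'.symm hv u

lemma exists_surjective_of_card_torsionBy_le {n d : ℕ} (hn : 0 < n) [Finite G]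
    (hG : ∀ x : G, n • x = 0)
    (hcard : ∀ p : ℕ, p.Prime → p ∣ n → Nat.card (torsionBy G p) ≤ p ^ d) :
    ∃ f : (Fin d → ZMod n) →+ G, Function.Surjective f := by
  obtain ⟨g, hg⟩ := exists_closure_range_eq_top hn hG hcard
  have : Module (ZMod n) G := AddCommGroup.zmodModule hG
  refine ⟨(Fintype.linearCombination (ZMod n) g).toAddMonoidHom, LinearMap.range_eq_top.1 ?_⟩
  rw [Fintype.range_linearCombination, span_zmod_eq_top_iff, hg]

lemma nonempty_addEquiv_of_card_torsionBy_le [Finite G] {n d : ℕ} (hn : 0 < n)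
    (hG : ∀ x : G, n • x = 0)
    (hcard : ∀ p : ℕ, p.Prime → p ∣ n → Nat.card (torsionBy G p) ≤ p ^ d)
    (hle : n ^ d ≤ Nat.card G) : Nonempty (G ≃+ (Fin d → ZMod n)) := by
  have : NeZero n := ⟨hn.ne'⟩
  obtain ⟨f, hf⟩ := exists_surjective_of_card_torsionBy_le hn hG hcard
  have hbij : Function.Bijective f := hf.bijective_of_nat_card_le <| by
    rwa [Nat.card_fun, Nat.card_fin, Nat.card_zmod]
  exact ⟨(AddEquiv.ofBijective f hbij).symm⟩

lemma card_le_of_card_torsionBy_le [Finite G] {n d : ℕ} (hn : 0 < n)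
    (hG : ∀ x : G, n • x = 0)
    (hcard : ∀ p : ℕ, p.Prime → p ∣ n → Nat.card (torsionBy G p) ≤ p ^ d) :
    Nat.card G ≤ n ^ d := by
  have : NeZero n := ⟨hn.ne'⟩
  obtain ⟨f, hf⟩ := exists_surjective_of_card_torsionBy_le hn hG hcard
  simpa only [Nat.card_fun, Nat.card_fin, Nat.card_zmod] using Nat.card_le_card_of_surjective f hf

end Generators

section SolSub

open AddSubgroup (torsionBy)

lemma eq_zero_of_zsmul_eq_zero_of_isCoprime {G : Type*} [AddCommGroup G] {a b : ℤ} {x : G}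
    (hab : IsCoprime a b) (ha : a • x = 0) (hb : b • x = 0) : x = 0 := by
  obtain ⟨α, β, hαβ⟩ := hab
  rw [← one_smul ℤ x, ← hαβ, add_smul, mul_smul, mul_smul, ha, hb, smul_zero, smul_zero, add_zero]

variable {A Ahat : Type*} [AddCommGroup A] [AddCommGroup Ahat]

/-- The homomorphism `(φl, r; s, -φm) : A × Ahat → Ahat × A` whose kernel is `solSub φl φm r s`.
With `φl` and `φm` interchanged it is, up to sign, the adjugate matrix: the two homomorphisms
compose to a scalar. -/
def solMap (φl : A →+ Ahat) (φm : Ahat →+ A) (r s : ℤ) : A × Ahat →+ Ahat × A :=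
  (φl.coprod (zsmulAddGroupHom r)).prod ((zsmulAddGroupHom s).coprod (-φm))

lemma solMap_apply (φl : A →+ Ahat) (φm : Ahat →+ A) (r s : ℤ) (q : A × Ahat) :
    solMap φl φm r s q = (φl q.1 + r • q.2, s • q.1 - φm q.2) := by
  simp [solMap, sub_eq_add_neg]

lemma ker_solMap (φl : A →+ Ahat) (φm : Ahat →+ A) (r s : ℤ) :
    (solMap φl φm r s).ker = solSub φl φm r s := by
  ext q
  rw [AddMonoidHom.mem_ker, solMap_apply, Prod.mk_eq_zero, add_eq_zero_iff_eq_neg, sub_eq_zero,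
    eq_comm (a := s • q.1)]
  rfl

variable {φl : A →+ Ahat} {φm : Ahat →+ A} {r s : ℤ}

lemma solMap_solMap {n : ℕ} (hml : ∀ a : A, φm (φl a) = (-((n : ℤ) + r * s)) • a)
    (hlm : ∀ b : Ahat, φl (φm b) = (-((n : ℤ) + r * s)) • b) (q : A × Ahat) :
    solMap φm φl r s (solMap φl φm r s q) = -(n • q) := by
  ext
  · simp only [solMap_apply, map_add, map_zsmul, hml, Prod.fst_neg, Prod.smul_fst]
    module
  · simp only [solMap_apply, map_sub, map_zsmul, hlm, Prod.snd_neg, Prod.smul_snd]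
    module

lemma ker_solMap_comp_solMap {n : ℕ} (hml : ∀ a : A, φm (φl a) = (-((n : ℤ) + r * s)) • a)
    (hlm : ∀ b : Ahat, φl (φm b) = (-((n : ℤ) + r * s)) • b) :
    ((solMap φm φl r s).comp (solMap φl φm r s)).ker = torsionBy (A × Ahat) n := by
  ext q
  rw [AddMonoidHom.mem_ker, AddMonoidHom.comp_apply, solMap_solMap hml hlm, neg_eq_zero,
    AddSubgroup.torsionBy.nsmul_iff]

lemma nsmul_solSub_eq_zero {n : ℕ} (hml : ∀ a : A, φm (φl a) = (-((n : ℤ) + r * s)) • a)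
    (hlm : ∀ b : Ahat, φl (φm b) = (-((n : ℤ) + r * s)) • b) (q : solSub φl φm r s) :
    n • q = 0 := by
  have hq : solMap φl φm r s q = 0 := (ker_solMap φl φm r s).ge q.2
  refine Subtype.ext (neg_eq_zero.1 ?_)
  rw [AddSubgroup.coe_nsmul, ← solMap_solMap hml hlm, hq, map_zero]

lemma solMap_surjective {n : ℕ} (hdivA : ∀ a : A, ∃ b : A, n • b = a)
    (hdivAhat : ∀ a : Ahat, ∃ b : Ahat, n • b = a)
    (hml : ∀ a : A, φm (φl a) = (-((n : ℤ) + r * s)) • a)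
    (hlm : ∀ b : Ahat, φl (φm b) = (-((n : ℤ) + r * s)) • b) :
    Function.Surjective (solMap φl φm r s) := by
  rintro ⟨y, x⟩
  obtain ⟨y', rfl⟩ := hdivAhat y
  obtain ⟨x', rfl⟩ := hdivA x
  refine ⟨-solMap φm φl r s (y', x'), ?_⟩
  rw [map_neg, solMap_solMap hlm hml, neg_neg, Prod.smul_mk]

lemma card_solSub_mul_card_solSub {n : ℕ} (hdivA : ∀ a : A, ∃ b : A, n • b = a)
    (hdivAhat : ∀ a : Ahat, ∃ b : Ahat, n • b = a)
    (hml : ∀ a : A, φm (φl a) = (-((n : ℤ) + r * s)) • a)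
    (hlm : ∀ b : Ahat, φl (φm b) = (-((n : ℤ) + r * s)) • b) :
    Nat.card (solSub φl φm r s) * Nat.card (solSub φm φl r s) =
      Nat.card (torsionBy A n) * Nat.card (torsionBy Ahat n) := by
  rw [← ker_solMap, ← ker_solMap, ← card_ker_comp _ (solMap_surjective hdivA hdivAhat hml hlm),
    ker_solMap_comp_solMap hml hlm, card_torsionBy_prod]

lemma card_torsionBy_solSub_le_left {p : ℤ} (hr : IsCoprime p r) [Finite (torsionBy A p)] :
    Nat.card (torsionBy (solSub φl φm r s) p) ≤ Nat.card (torsionBy A p) := by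
  let fst : torsionBy (solSub φl φm r s) p →+ A :=
    (AddMonoidHom.fst A Ahat).comp ((solSub φl φm r s).subtype.comp (AddSubgroup.subtype _))
  refine card_torsionBy_le_of_injective fst ((injective_iff_map_eq_zero fst).2 ?_)
  rintro ⟨⟨⟨x, y⟩, hxy⟩, htor⟩ (rfl : x = 0)
  have hpy : p • y = 0 := congrArg (fun q : solSub φl φm r s => q.1.2) htor
  have hry : r • y = 0 := by simpa only [map_zero, zero_eq_neg] using hxy.1
  obtain rfl : y = 0 := eq_zero_of_zsmul_eq_zero_of_isCoprime hr hpy hry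
  rfl

lemma card_torsionBy_solSub_le_right {p : ℤ} (hs : IsCoprime p s) [Finite (torsionBy Ahat p)] :
    Nat.card (torsionBy (solSub φl φm r s) p) ≤ Nat.card (torsionBy Ahat p) := by
  let snd : torsionBy (solSub φl φm r s) p →+ Ahat :=
    (AddMonoidHom.snd A Ahat).comp ((solSub φl φm r s).subtype.comp (AddSubgroup.subtype _))
  refine card_torsionBy_le_of_injective snd ((injective_iff_map_eq_zero snd).2 ?_)
  rintro ⟨⟨⟨x, y⟩, hxy⟩, htor⟩ (rfl : y = 0)
  have hpx : p • x = 0 := congrArg (fun q : solSub φl φm r s => q.1.1) htor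
  have hsx : s • x = 0 := by simpa only [map_zero] using hxy.2.symm
  obtain rfl : x = 0 := eq_zero_of_zsmul_eq_zero_of_isCoprime hs hpx hsx
  rfl

lemma card_torsionBy_solSub_le_ker {p : ℤ} (hr : p ∣ r) (hs : p ∣ s) [Finite (torsionBy A p)]
    [Finite (torsionBy Ahat p)] :
    Nat.card (torsionBy (solSub φl φm r s) p) ≤
      Nat.card (torsionBy φl.ker p) * Nat.card (torsionBy φm.ker p) := by
  let fst : torsionBy (solSub φl φm r s) p →+ A :=
    (AddMonoidHom.fst A Ahat).comp ((solSub φl φm r s).subtype.comp (AddSubgroup.subtype _))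
  let snd : torsionBy (solSub φl φm r s) p →+ Ahat :=
    (AddMonoidHom.snd A Ahat).comp ((solSub φl φm r s).subtype.comp (AddSubgroup.subtype _))
  have hfst (q) : fst q ∈ φl.ker := by
    have hy : p • snd q = 0 := congrArg (fun q : solSub φl φm r s => q.1.2) q.2
    exact q.1.2.1.trans (neg_eq_zero.2 (Submodule.torsionBy_le_torsionBy_of_dvd _ _ hr hy))
  have hsnd (q) : snd q ∈ φm.ker := by
    have hx : p • fst q = 0 := congrArg (fun q : solSub φl φm r s => q.1.1) q.2
    exact q.1.2.2.trans (Submodule.torsionBy_le_torsionBy_of_dvd _ _ hs hx)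
  rw [← card_torsionBy_prod]
  refine card_torsionBy_le_of_injective ((fst.codRestrict _ hfst).prod (snd.codRestrict _ hsnd)) ?_
  intro q q' hqq'
  obtain ⟨hx, hy⟩ := Prod.ext_iff.1 hqq'
  exact Subtype.ext (Subtype.ext (Prod.ext (congrArg Subtype.val hx) (congrArg Subtype.val hy)))

lemma card_torsionBy_solSub_le {p : ℕ} (hp : p.Prime) [Finite (torsionBy A p)]
    [Finite (torsionBy Ahat p)] {N : ℕ} (hA : Nat.card (torsionBy A p) ≤ N)
    (hAhat : Nat.card (torsionBy Ahat p) ≤ N)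
    (hker : (p : ℤ) ∣ r → (p : ℤ) ∣ s →
      Nat.card (torsionBy φl.ker p) * Nat.card (torsionBy φm.ker p) ≤ N) :
    Nat.card (torsionBy (solSub φl φm r s) p) ≤ N := by
  have hcop {t : ℤ} : ¬ (p : ℤ) ∣ t → IsCoprime (p : ℤ) t :=
    (Nat.prime_iff_prime_int.1 hp).coprime_iff_not_dvd.2
  by_cases hr : (p : ℤ) ∣ r
  · by_cases hs : (p : ℤ) ∣ s
    · exact (card_torsionBy_solSub_le_ker hr hs).trans (hker hr hs)
    · exact (card_torsionBy_solSub_le_right (hcop hs)).trans hAhat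
  · exact (card_torsionBy_solSub_le_left (hcop hr)).trans hA

theorem groupsOfSymplecticInvolutions_GAv_iso_general {d n : ℕ} (hn : 0 < n)
    (hdivA : ∀ a : A, ∃ b : A, n • b = a) (hdivAhat : ∀ a : Ahat, ∃ b : Ahat, n • b = a)
    (htorA : Nonempty (torsionBy A n ≃+ (Fin d → ZMod n)))
    (htorAhat : Nonempty (torsionBy Ahat n ≃+ (Fin d → ZMod n)))
    (hml : ∀ a : A, φm (φl a) = (-((n : ℤ) + r * s)) • a)
    (hlm : ∀ b : Ahat, φl (φm b) = (-((n : ℤ) + r * s)) • b)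
    (hker : ∀ p : ℕ, p.Prime → p ∣ n → (p : ℤ) ∣ r → (p : ℤ) ∣ s →
      Nat.card (torsionBy φl.ker p) * Nat.card (torsionBy φm.ker p) ≤ p ^ d) :
    Nonempty (solSub φl φm r s ≃+ (Fin d → ZMod n)) := by
  have : NeZero n := ⟨hn.ne'⟩
  obtain ⟨eA⟩ := htorA
  obtain ⟨eAhat⟩ := htorAhat
  have hmul : Nat.card (solSub φl φm r s) * Nat.card (solSub φm φl r s) = n ^ d * n ^ d := by
    rw [card_solSub_mul_card_solSub hdivA hdivAhat hml hlm, card_torsionBy_of_dvd eA dvd_rfl,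
      card_torsionBy_of_dvd eAhat dvd_rfl]
  have hpos : 0 < n ^ d := by positivity
  have : Finite (solSub φl φm r s) :=
    Nat.finite_of_card_ne_zero (left_ne_zero_of_mul (hmul.trans_ne (by positivity)))
  have : Finite (solSub φm φl r s) :=
    Nat.finite_of_card_ne_zero (right_ne_zero_of_mul (hmul.trans_ne (by positivity)))
  have hrank (p : ℕ) (hp : p.Prime) (hpn : p ∣ n) :
      Nat.card (torsionBy (solSub φl φm r s) p) ≤ p ^ d ∧
        Nat.card (torsionBy (solSub φm φl r s) p) ≤ p ^ d := by
    have hA := card_torsionBy_of_dvd eA hpn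
    have hAhat := card_torsionBy_of_dvd eAhat hpn
    have hne : p ^ d ≠ 0 := pow_ne_zero d hp.ne_zero
    have := Nat.finite_of_card_ne_zero (hA.trans_ne hne)
    have := Nat.finite_of_card_ne_zero (hAhat.trans_ne hne)
    exact ⟨card_torsionBy_solSub_le hp hA.le hAhat.le (hker p hp hpn),
      card_torsionBy_solSub_le hp hAhat.le hA.le fun hr hs =>
        (mul_comm _ _).trans_le (hker p hp hpn hr hs)⟩
  have hle : Nat.card (solSub φm φl r s) ≤ n ^ d :=
    card_le_of_card_torsionBy_le hn (nsmul_solSub_eq_zero hlm hml)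
      fun p hp hpn => (hrank p hp hpn).2
  refine nonempty_addEquiv_of_card_torsionBy_le hn (nsmul_solSub_eq_zero hml hlm)
    (fun p hp hpn => (hrank p hp hpn).1) (Nat.le_of_mul_le_mul_right ?_ hpos)
  exact hmul.ge.trans (Nat.mul_le_mul_left _ hle)

end SolSub

/-- Theorem 3.1 / Claim 3.5: the solution group `G_A(v)` is isomorphic to `(ℤ/nℤ)⁴`. -/
theorem groupsOfSymplecticInvolutions_GAv_iso
    (A Ahat : Type*) [AddCommGroup A] [AddCommGroup Ahat]
    (hdivA : ∀ m : ℕ, 0 < m → ∀ a : A, ∃ b : A, m • b = a)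
    (hdivAhat : ∀ m : ℕ, 0 < m → ∀ a : Ahat, ∃ b : Ahat, m • b = a)
    (htorA : ∀ m : ℕ, 0 < m → Nonempty (torsionSub (m : ℤ) A ≃+ (Fin 4 → ZMod m)))
    (htorAhat : ∀ m : ℕ, 0 < m → Nonempty (torsionSub (m : ℤ) Ahat ≃+ (Fin 4 → ZMod m)))
    (φl : A →+ Ahat) (φm : Ahat →+ A)
    (r s : ℤ) (n : ℕ) (hn : 1 ≤ n)
    (hml : ∀ a : A, φm (φl a) = (-((n : ℤ) + r * s)) • a)
    (hlm : ∀ b : Ahat, φl (φm b) = (-((n : ℤ) + r * s)) • b)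
    (hcase :
      ((n : ℤ) + r * s = 0 ∧ φl = 0 ∧ φm = 0 ∧ 0 < r ∧ s < 0 ∧ Int.gcd r s = 1) ∨
      (0 < (n : ℤ) + r * s ∧
        ∃ n₁ n₂ : ℕ, 0 < n₁ ∧ 0 < n₂ ∧ n₁ ∣ n₂ ∧ ((n₁ : ℤ) * n₂ = (n : ℤ) + r * s) ∧
          Nonempty (φl.ker ≃+ ((Fin 2 → ZMod n₁) × (Fin 2 → ZMod n₂))) ∧
          Nonempty (φm.ker ≃+ ((Fin 2 → ZMod n₁) × (Fin 2 → ZMod n₂))) ∧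
          (∀ p : ℕ, p.Prime → ¬((p : ℤ) ∣ r ∧ (p : ℤ) ∣ s ∧ p ∣ n₁)))) :
    Nonempty (solSub φl φm r s ≃+ (Fin 4 → ZMod n)) := by
  refine groupsOfSymplecticInvolutions_GAv_iso_general hn (hdivA n hn) (hdivAhat n hn) (htorA n hn)
    (htorAhat n hn) hml hlm fun p hp _ hr hs => ?_
  obtain ⟨-, -, -, -, -, hgcd⟩ | ⟨-, n₁, n₂, hn₁, hn₂, -, -, ⟨el⟩, ⟨em⟩, hprim⟩ := hcase
  · have hp1 : (p : ℤ) ∣ Int.gcd r s := Int.dvd_coe_gcd hr hs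
    rw [hgcd, Int.natCast_dvd_natCast] at hp1
    exact absurd hp1 hp.not_dvd_one
  · have : NeZero n₁ := ⟨hn₁.ne'⟩
    have : NeZero n₂ := ⟨hn₂.ne'⟩
    have hpn₁ : ¬ p ∣ n₁ := fun h => hprim p hp ⟨hr, hs, h⟩
    exact (Nat.mul_le_mul (card_torsionBy_le_pow_of_not_dvd el hp hpn₁)
      (card_torsionBy_le_pow_of_not_dvd em hp hpn₁)).trans_eq (pow_add p 2 2).symm
end

section
/- Let A and Â be abelian groups, φ_l : A → Â and φ_m : Â → A group homomorphisms, and r, s, n integers with χ := n + r·s, such that φ_m ∘ φ_l equals multiplication by −χ on A and φ_l ∘ φ_m equals multiplication by −χ on Â. Let p be a prime and q ≥ 1 with p^q ∣ n and p ∤ r. Then the first projection (x,y) ↦ x restricts to a group isomorphism from G ∩ (A[p^q] × Â[p^q]) onto A[p^q], where G := {(x,y) ∈ A × Â : φ_l(x) = −r·y and φ_m(y) = s·x}. -/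
/-!
Since `r` is invertible modulo `p ^ q`, it acts bijectively on `p ^ q`-torsion. Hence, for a
`p ^ q`-torsion point `x`, the equation `φl x = -(r • y)` has exactly one `p ^ q`-torsion solution
`y`. Applying `φm` to it gives `r • φm y = (n + r * s) • x = r • (s • x)`, as `p ^ q ∣ n`, and
cancelling `r` on the `p ^ q`-torsion of `A` yields the second equation `φm y = s • x`.
-/

theorem bijOn_smul_torsionBy_of_isCoprime {R M : Type*} [CommSemiring R] [AddCommMonoid M]
    [Module R M] {r m : R} (h : IsCoprime r m) :
    Set.BijOn (fun b : M => r • b) (Submodule.torsionBy R M m) (Submodule.torsionBy R M m) := by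
  obtain ⟨u, w, huw⟩ := h
  have inverse : ∀ b ∈ Submodule.torsionBy R M m, u • r • b = b := fun b hb => by
    calc u • r • b = (u * r) • b + w • m • b := by
          rw [(Submodule.mem_torsionBy_iff m b).mp hb, smul_zero, add_zero, mul_smul]
      _ = b := by rw [smul_smul w, ← add_smul, huw, one_smul]
  refine Set.InvOn.bijOn (f' := fun b => u • b) ⟨inverse, fun b hb => ?_⟩
    (fun _ => Submodule.smul_mem _ r) (fun _ => Submodule.smul_mem _ u)
  exact (smul_comm r u b).trans (inverse b hb)

theorem mem_torsionSub_iff {A : Type*} [AddCommGroup A] {m : ℤ} {a : A} :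
    a ∈ torsionSub m A ↔ m • a = 0 :=
  Iff.rfl

theorem bijOn_zsmul_torsionSub_of_isCoprime {B : Type*} [AddCommGroup B] {r m : ℤ}
    (h : IsCoprime r m) :
    Set.BijOn (fun b : B => r • b) (torsionSub m B) (torsionSub m B) :=
  bijOn_smul_torsionBy_of_isCoprime h

theorem map_mem_torsionSub {A B : Type*} [AddCommGroup A] [AddCommGroup B] (φ : A →+ B) {m : ℤ}
    {x : A} (hx : x ∈ torsionSub m A) : φ x ∈ torsionSub m B :=
  mem_torsionSub_iff.mpr (by rw [← map_zsmul, mem_torsionSub_iff.mp hx, map_zero])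

theorem torsionSub_le_of_dvd {A : Type*} [AddCommGroup A] {m n : ℤ} (h : m ∣ n) :
    torsionSub m A ≤ torsionSub n A :=
  Submodule.torsionBy_le_torsionBy_of_dvd (M := A) m n h

section Solutions

variable {A Ahat : Type*} [AddCommGroup A] [AddCommGroup Ahat] {φl : A →+ Ahat} {φm : Ahat →+ A}
  {r s n m : ℤ}

theorem mem_solSub_iff_of_mem_torsionSub (hml : ∀ a : A, φm (φl a) = (-(n + r * s)) • a)
    (hmn : m ∣ n) (hrm : IsCoprime r m) {x : A} {y : Ahat} (hx : x ∈ torsionSub m A)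
    (hy : y ∈ torsionSub m Ahat) :
    (x, y) ∈ solSub φl φm r s ↔ φl x = -(r • y) := by
  refine ⟨And.left, fun hxy => ⟨hxy, ?_⟩⟩
  have hnx : n • x = 0 := mem_torsionSub_iff.mp (torsionSub_le_of_dvd hmn hx)
  refine (bijOn_zsmul_torsionSub_of_isCoprime hrm).injOn (map_mem_torsionSub φm hy)
    (zsmul_mem hx s) ?_
  calc r • φm y = -φm (φl x) := by rw [hxy, map_neg, map_zsmul, neg_neg]
    _ = n • x + r • s • x := by rw [hml, neg_smul, neg_neg, add_smul, mul_smul]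
    _ = r • s • x := by rw [hnx, zero_add]

theorem existsUnique_mem_solSub_of_isCoprime (hml : ∀ a : A, φm (φl a) = (-(n + r * s)) • a)
    (hmn : m ∣ n) (hrm : IsCoprime r m) {x : A} (hx : x ∈ torsionSub m A) :
    ∃! y : Ahat, y ∈ torsionSub m Ahat ∧ (x, y) ∈ solSub φl φm r s := by
  have hbij := bijOn_zsmul_torsionSub_of_isCoprime (B := Ahat) hrm
  obtain ⟨y, hy, hry⟩ := hbij.surjOn (neg_mem (map_mem_torsionSub φl hx))
  have hxy : φl x = -(r • y) := (neg_eq_iff_eq_neg.mpr hry).symm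
  refine ⟨y, ⟨hy, (mem_solSub_iff_of_mem_torsionSub hml hmn hrm hx hy).mpr hxy⟩, ?_⟩
  rintro z ⟨hz, hxz, -⟩
  exact hbij.injOn hz hy (neg_injective (hxz.symm.trans hxy))

theorem proj_iso_on_pq_torsion_of_coprime_general
    (hml : ∀ a : A, φm (φl a) = (-(n + r * s)) • a) (hmn : m ∣ n) (hrm : IsCoprime r m) :
    ∃ e : ↥(solSub φl φm r s ⊓ (torsionSub m A).prod (torsionSub m Ahat)) ≃+ ↥(torsionSub m A),
      ∀ g, (e g : A) = (g : A × Ahat).1 := by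
  let proj : ↥(solSub φl φm r s ⊓ (torsionSub m A).prod (torsionSub m Ahat)) →+
      ↥(torsionSub m A) :=
    ((AddMonoidHom.fst A Ahat).comp (AddSubgroup.subtype _)).codRestrict _ fun g => g.2.2.1
  have proj_injective : Function.Injective proj := by
    rintro ⟨⟨x, y⟩, hxy, hx, hy⟩ ⟨⟨x', y'⟩, hxy', _, hy'⟩ h
    obtain rfl : x = x' := congrArg Subtype.val h
    obtain rfl : y = y' :=
      (existsUnique_mem_solSub_of_isCoprime hml hmn hrm hx).unique ⟨hy, hxy⟩ ⟨hy', hxy'⟩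
    rfl
  have proj_surjective : Function.Surjective proj := by
    rintro ⟨x, hx⟩
    obtain ⟨y, hy, hxy⟩ := (existsUnique_mem_solSub_of_isCoprime hml hmn hrm hx).exists
    exact ⟨⟨(x, y), hxy, hx, hy⟩, rfl⟩
  exact ⟨AddEquiv.ofBijective proj ⟨proj_injective, proj_surjective⟩, fun _ => rfl⟩

end Solutions

/-- Case 2 of Claim 3.5: if `p^q ∣ n` and `p ∤ r`, the first projection restricts to a
group isomorphism `G ∩ (A[p^q] × Â[p^q]) ≅ A[p^q]`. -/
theorem proj_iso_on_pq_torsion_of_coprime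
    (A Ahat : Type*) [AddCommGroup A] [AddCommGroup Ahat]
    (φl : A →+ Ahat) (φm : Ahat →+ A) (r s n : ℤ)
    (hml : ∀ a : A, φm (φl a) = (-(n + r * s)) • a)
    (hlm : ∀ b : Ahat, φl (φm b) = (-(n + r * s)) • b)
    (p : ℕ) (hp : p.Prime) (q : ℕ) (hq : 1 ≤ q)
    (hdvd : ((p : ℤ) ^ q) ∣ n) (hpr : ¬ ((p : ℤ) ∣ r)) :
    ∃ e : ↥(solSub φl φm r s ⊓
        (torsionSub ((p : ℤ) ^ q) A).prod (torsionSub ((p : ℤ) ^ q) Ahat)) ≃+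
        ↥(torsionSub ((p : ℤ) ^ q) A),
      ∀ g, (e g : A) = (g : A × Ahat).1 := by
  have hcop : IsCoprime r ((p : ℤ) ^ q) :=
    ((Nat.prime_iff_prime_int.mp hp).coprime_iff_not_dvd.mpr hpr).symm.pow_right
  exact proj_iso_on_pq_torsion_of_coprime_general hml hdvd hcop
end

section
/- Let T be a divisible abelian group such that T[m] ≅ (ℤ/mℤ)⁸ for every positive integer m. Let n, d ≥ 1 and let G₀ ≤ T be a subgroup with G₀ ≅ (ℤ/nℤ)⁴. Then the subgroup {t ∈ T : d·t ∈ G₀} is isomorphic to (ℤ/dnℤ)⁴ × (ℤ/dℤ)⁴. -/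
/-- Multiplication by `d` as a group homomorphism. -/
def smulHom (d : ℤ) (T : Type*) [AddCommGroup T] : T →+ T :=
  AddMonoidHom.mk' (fun t => d • t) (fun a b => smul_add d a b)

/-!
If `T[m]` has `m ^ k` elements for every `m > 0`, then multiplication by `d` maps `T[m]` onto
`T[m / gcd d m]`, with kernel `T[gcd d m]`: the image lies there, and it has the right cardinality.
So the preimage of `S ≤ T` has `gcd d m ^ k * |S[m / gcd d m]|` elements killed by `m`. For
`S ≃ (ℤ/nℤ)^r` and `T[m] ≃ (ℤ/mℤ)^(r + s)` this is the count for `(ℤ/dnℤ)^r × (ℤ/dℤ)^s`, since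
`gcd (d * n) m = gcd d m * gcd n (m / gcd d m)`.

A finite abelian group is determined by the numbers `|A[m]|`: they give `|Hom (G, A)|` for every
finite abelian `G`. Sorting homomorphisms by their kernel and inducting on `|G|`, they also give the
number of embeddings `G ↪ A`; so groups with equal counts embed into each other.
-/

section CardSubgroup

variable {G H : Type*} [AddCommGroup G] [AddCommGroup H]

theorem card_addSubgroupOf_eq_card_inf (K L : AddSubgroup G) :
    Nat.card (K.addSubgroupOf L) = Nat.card (K ⊓ L : AddSubgroup G) := by
  rw [← AddSubgroup.addSubgroupOf_map_subtype,
    AddSubgroup.card_map_of_injective L.subtype_injective]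

theorem card_ker_inf_mul_card_map (f : G →+ H) (L : AddSubgroup G) :
    Nat.card (f.ker ⊓ L : AddSubgroup G) * Nat.card (L.map f) = Nat.card L := by
  rw [← AddSubgroup.relIndex_ker, ← card_addSubgroupOf_eq_card_inf]
  exact (f.ker.addSubgroupOf L).card_mul_index

theorem map_inf_comap_eq_map_inf (f : G →+ H) (K : AddSubgroup G) (L : AddSubgroup H) :
    (K ⊓ L.comap f).map f = K.map f ⊓ L :=
  SetLike.coe_injective (Set.image_inter_preimage f K L)

end CardSubgroup

section TorsionSub

variable {A B : Type*} [AddCommGroup A] [AddCommGroup B]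

theorem mem_torsionSub_natCast {m : ℕ} {a : A} : a ∈ torsionSub (m : ℤ) A ↔ m • a = 0 := by
  rw [← natCast_zsmul]
  rfl

theorem smulHom_natCast_apply (d : ℕ) (a : A) : smulHom (d : ℤ) A a = d • a :=
  natCast_zsmul a d

theorem ker_smulHom (d : ℤ) : (smulHom d A).ker = torsionSub d A :=
  rfl

theorem torsionSub_eq_ker_nsmulAddMonoidHom (m : ℕ) :
    torsionSub (m : ℤ) A = (nsmulAddMonoidHom m : A →+ A).ker := by
  ext a
  exact mem_torsionSub_natCast

theorem card_torsionSub_congr (e : A ≃+ B) (m : ℕ) :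
    Nat.card (torsionSub (m : ℤ) A) = Nat.card (torsionSub (m : ℤ) B) := by
  refine Nat.card_congr (e.toEquiv.subtypeEquiv fun a => ?_)
  simp [mem_torsionSub_natCast, ← map_nsmul]

theorem card_torsionSub_prod (m : ℕ) :
    Nat.card (torsionSub (m : ℤ) (A × B)) =
      Nat.card (torsionSub (m : ℤ) A) * Nat.card (torsionSub (m : ℤ) B) := by
  have hprod : torsionSub (m : ℤ) (A × B) = (torsionSub (m : ℤ) A).prod (torsionSub (m : ℤ) B) := by
    ext x
    simp [mem_torsionSub_natCast, AddSubgroup.mem_prod, Prod.ext_iff]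
  rw [hprod, Nat.card_congr (AddSubgroup.prodEquiv _ _).toEquiv, Nat.card_prod]

theorem card_torsionSub_pi {ι : Type*} [Fintype ι] (M : ι → Type*) [∀ i, AddCommGroup (M i)]
    (m : ℕ) :
    Nat.card (torsionSub (m : ℤ) (∀ i, M i)) = ∏ i, Nat.card (torsionSub (m : ℤ) (M i)) := by
  rw [← Nat.card_pi]
  refine Nat.card_congr (Equiv.trans (Equiv.subtypeEquivRight fun x => ?_) Equiv.subtypePiEquivPi)
  simp [mem_torsionSub_natCast, funext_iff]

theorem card_torsionSub_pi_zmod (ι : Type*) [Fintype ι] (n m : ℕ) [NeZero n] :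
    Nat.card (torsionSub (m : ℤ) (ι → ZMod n)) = n.gcd m ^ Fintype.card ι := by
  rw [card_torsionSub_pi, torsionSub_eq_ker_nsmulAddMonoidHom,
    IsAddCyclic.card_nsmulAddMonoidHom_ker, Nat.card_zmod, Finset.prod_const, Finset.card_univ]

theorem card_torsionSub_addSubgroup (S : AddSubgroup A) (m : ℕ) :
    Nat.card (torsionSub (m : ℤ) S) = Nat.card (torsionSub (m : ℤ) A ⊓ S : AddSubgroup A) := by
  have hsub : torsionSub (m : ℤ) S = (torsionSub (m : ℤ) A).addSubgroupOf S := by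
    ext x
    simp [mem_torsionSub_natCast, AddSubgroup.mem_addSubgroupOf, Subtype.ext_iff]
  rw [hsub, card_addSubgroupOf_eq_card_inf]

theorem torsionSub_inf_torsionSub (d m : ℕ) :
    torsionSub (d : ℤ) A ⊓ torsionSub (m : ℤ) A = torsionSub (d.gcd m : ℤ) A := by
  ext a
  simp only [AddSubgroup.mem_inf, mem_torsionSub_natCast, ← addOrderOf_dvd_iff_nsmul_eq_zero,
    Nat.dvd_gcd_iff]

end TorsionSub

section Embeddings

open scoped DirectSum

variable {G A B : Type*} [AddCommGroup G] [AddCommGroup A] [AddCommGroup B]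

theorem card_zmod_addMonoidHom (m : ℕ) :
    Nat.card (ZMod m →+ A) = Nat.card (torsionSub (m : ℤ) A) := by
  refine Nat.card_congr ((ZMod.lift m).symm.trans ?_)
  exact ((zmultiplesHom A).subtypeEquiv fun a => by simp [mem_torsionSub_natCast]).symm

theorem card_addMonoidHom_of_addEquiv_directSum_zmod {ι : Type*} [Fintype ι] {n : ι → ℕ}
    (e : G ≃+ ⨁ i, ZMod (n i)) :
    Nat.card (G →+ A) = ∏ i, Nat.card (torsionSub (n i : ℤ) A) := by
  classical
  simp_rw [← card_zmod_addMonoidHom, ← Nat.card_pi]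
  exact Nat.card_congr (e.addMonoidHomCongrLeftEquiv.trans DFinsupp.liftAddHom.symm.toEquiv)

theorem card_addMonoidHom_eq_of_card_torsionSub_eq [Finite G]
    (h : ∀ m : ℕ, 0 < m → Nat.card (torsionSub (m : ℤ) A) = Nat.card (torsionSub (m : ℤ) B)) :
    Nat.card (G →+ A) = Nat.card (G →+ B) := by
  obtain ⟨ι, _, n, hn, ⟨e⟩⟩ := AddCommGroup.equiv_directSum_zmod_of_finite' G
  rw [card_addMonoidHom_of_addEquiv_directSum_zmod e,
    card_addMonoidHom_of_addEquiv_directSum_zmod e]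
  exact Finset.prod_congr rfl fun i _ => h (n i) (zero_lt_one.trans (hn i))

theorem card_addMonoidHom_ker_eq (K : AddSubgroup G) :
    Nat.card {f : G →+ A // f.ker = K} = Nat.card {g : G ⧸ K →+ A // g.ker = ⊥} := by
  have ker_comp_mk {g : G ⧸ K →+ A} (hg : g.ker = ⊥) :
      (g.comp (QuotientAddGroup.mk' K)).ker = K := by
    rw [← AddMonoidHom.comap_ker, hg, AddMonoidHom.comap_bot, QuotientAddGroup.ker_mk']
  refine (Nat.card_eq_of_bijective
    (fun g : {g : G ⧸ K →+ A // g.ker = ⊥} => ⟨_, ker_comp_mk g.2⟩) ⟨?_, ?_⟩).symm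
  · intro g g' hgg'
    exact Subtype.ext (QuotientAddGroup.addMonoidHom_ext K (congrArg Subtype.val hgg'))
  · rintro ⟨f, rfl⟩
    refine ⟨⟨QuotientAddGroup.kerLift f, ?_⟩, rfl⟩
    exact (AddMonoidHom.ker_eq_bot_iff _).2 (QuotientAddGroup.kerLift_injective f)

theorem card_addMonoidHom_eq_sum_card_ker_eq_bot [Finite G] [Finite A]
    [Fintype (AddSubgroup G)] :
    Nat.card (G →+ A) =
      ∑ K : AddSubgroup G, Nat.card {g : G ⧸ K →+ A // g.ker = ⊥} := by
  have : Finite (G →+ A) := .of_injective _ DFunLike.coe_injective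
  simp_rw [← card_addMonoidHom_ker_eq, ← Nat.card_sigma]
  exact Nat.card_congr (Equiv.sigmaFiberEquiv AddMonoidHom.ker).symm

theorem card_quotient_lt_card [Finite G] {K : AddSubgroup G} (hK : K ≠ ⊥) :
    Nat.card (G ⧸ K) < Nat.card G := by
  rw [K.card_eq_card_quotient_mul_card_addSubgroup]
  exact lt_mul_of_one_lt_right Nat.card_pos (K.one_lt_card_iff_ne_bot.2 hK)

theorem card_addMonoidHom_ker_eq_bot_eq_of_card_torsionSub_eq [Finite A] [Finite B]
    (h : ∀ m : ℕ, 0 < m → Nat.card (torsionSub (m : ℤ) A) = Nat.card (torsionSub (m : ℤ) B))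
    (G : Type*) [AddCommGroup G] [Finite G] :
    Nat.card {f : G →+ A // f.ker = ⊥} = Nat.card {f : G →+ B // f.ker = ⊥} := by
  classical
  induction hG : Nat.card G using Nat.strong_induction_on generalizing G with
  | _ N ih =>
    subst hG
    have : Fintype (AddSubgroup G) := .ofFinite _
    have proper_quotients :
        ∑ K ∈ Finset.univ.erase (⊥ : AddSubgroup G), Nat.card {g : G ⧸ K →+ A // g.ker = ⊥} =
          ∑ K ∈ Finset.univ.erase (⊥ : AddSubgroup G), Nat.card {g : G ⧸ K →+ B // g.ker = ⊥} :=
      Finset.sum_congr rfl fun K hK =>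
        ih _ (card_quotient_lt_card (Finset.ne_of_mem_erase hK)) (G ⧸ K) rfl
    have all_quotients := card_addMonoidHom_eq_of_card_torsionSub_eq (G := G) h
    rw [card_addMonoidHom_eq_sum_card_ker_eq_bot, card_addMonoidHom_eq_sum_card_ker_eq_bot,
      ← Finset.add_sum_erase _ _ (Finset.mem_univ ⊥),
      ← Finset.add_sum_erase _ _ (Finset.mem_univ ⊥), proper_quotients] at all_quotients
    rw [card_addMonoidHom_ker_eq (A := A) ⊥, card_addMonoidHom_ker_eq (A := B) ⊥]
    exact Nat.add_right_cancel all_quotients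

theorem exists_injective_addMonoidHom_of_card_torsionSub_eq [Finite A] [Finite B]
    (h : ∀ m : ℕ, 0 < m → Nat.card (torsionSub (m : ℤ) A) = Nat.card (torsionSub (m : ℤ) B)) :
    ∃ f : A →+ B, Function.Injective f := by
  have : Finite (A →+ A) := .of_injective _ DFunLike.coe_injective
  have : Nonempty {f : A →+ A // f.ker = ⊥} :=
    ⟨.id A, (AddMonoidHom.ker_eq_bot_iff _).2 Function.injective_id⟩
  have card_pos : 0 < Nat.card {f : A →+ B // f.ker = ⊥} := by
    rw [← card_addMonoidHom_ker_eq_bot_eq_of_card_torsionSub_eq h]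
    exact Nat.card_pos
  obtain ⟨f, hf⟩ := (Nat.card_pos_iff.1 card_pos).1
  exact ⟨f, (AddMonoidHom.ker_eq_bot_iff f).1 hf⟩

theorem nonempty_addEquiv_of_card_torsionSub_eq [Finite A] [Finite B]
    (h : ∀ m : ℕ, 0 < m → Nat.card (torsionSub (m : ℤ) A) = Nat.card (torsionSub (m : ℤ) B)) :
    Nonempty (A ≃+ B) := by
  obtain ⟨f, hf⟩ := exists_injective_addMonoidHom_of_card_torsionSub_eq h
  obtain ⟨g, hg⟩ := exists_injective_addMonoidHom_of_card_torsionSub_eq fun m hm => (h m hm).symm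
  exact ⟨.ofBijective f (hf.bijective_of_nat_card_le (Nat.card_le_card_of_injective g hg))⟩

end Embeddings

section Comap

variable {T : Type*} [AddCommGroup T] {r : ℕ}

theorem card_torsionSub_eq_pow {m : ℕ} (e : torsionSub (m : ℤ) T ≃+ (Fin r → ZMod m)) :
    Nat.card (torsionSub (m : ℤ) T) = m ^ r := by
  rw [Nat.card_congr e.toEquiv, Nat.card_fun, Nat.card_zmod, Nat.card_fin]

theorem map_smulHom_torsionSub_le (d m : ℕ) :
    (torsionSub (m : ℤ) T).map (smulHom (d : ℤ) T) ≤ torsionSub ((m / d.gcd m : ℕ) : ℤ) T := by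
  rintro _ ⟨t, ht, rfl⟩
  have hdm : d * (m / d.gcd m) = m * (d / d.gcd m) := by
    rw [← Nat.mul_div_assoc _ (Nat.gcd_dvd_right d m), mul_comm,
      Nat.mul_div_assoc _ (Nat.gcd_dvd_left d m)]
  rw [mem_torsionSub_natCast, smulHom_natCast_apply, ← mul_nsmul, hdm, mul_nsmul,
    mem_torsionSub_natCast.1 ht, nsmul_zero]

theorem map_smulHom_torsionSub
    (hT : ∀ m : ℕ, 0 < m → Nat.card (torsionSub (m : ℤ) T) = m ^ r) (d : ℕ) {m : ℕ} (hm : 0 < m) :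
    (torsionSub (m : ℤ) T).map (smulHom (d : ℤ) T) = torsionSub ((m / d.gcd m : ℕ) : ℤ) T := by
  have gcd_pos : 0 < d.gcd m := Nat.gcd_pos_of_pos_right d hm
  have quot_pos : 0 < m / d.gcd m := Nat.div_gcd_pos_of_pos_right d hm
  have : Finite (torsionSub ((m / d.gcd m : ℕ) : ℤ) T) :=
    Nat.finite_of_card_ne_zero (by rw [hT _ quot_pos]; positivity)
  have card_map : (d.gcd m) ^ r * Nat.card ((torsionSub (m : ℤ) T).map (smulHom (d : ℤ) T)) =
      (d.gcd m) ^ r * (m / d.gcd m) ^ r := by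
    rw [← mul_pow, Nat.mul_div_cancel' (Nat.gcd_dvd_right d m), ← hT _ gcd_pos, ← hT m hm,
      ← torsionSub_inf_torsionSub, ← ker_smulHom, card_ker_inf_mul_card_map]
  refine AddSubgroup.eq_of_le_of_card_ge (map_smulHom_torsionSub_le d m) ?_
  rw [hT _ quot_pos, Nat.eq_of_mul_eq_mul_left (by positivity) card_map]

theorem card_torsionSub_comap_smulHom
    (hT : ∀ m : ℕ, 0 < m → Nat.card (torsionSub (m : ℤ) T) = m ^ r)
    (S : AddSubgroup T) (d : ℕ) {m : ℕ} (hm : 0 < m) :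
    Nat.card (torsionSub (m : ℤ) (S.comap (smulHom (d : ℤ) T))) =
      d.gcd m ^ r * Nat.card (torsionSub ((m / d.gcd m : ℕ) : ℤ) S) := by
  have ker_inf : (smulHom (d : ℤ) T).ker ⊓ (torsionSub (m : ℤ) T ⊓ S.comap (smulHom (d : ℤ) T)) =
      torsionSub (d.gcd m : ℤ) T := by
    rw [inf_left_comm, inf_eq_left.2 (AddMonoidHom.ker_le_comap _ S), inf_comm, ker_smulHom,
      torsionSub_inf_torsionSub]
  rw [card_torsionSub_addSubgroup, ← card_ker_inf_mul_card_map (smulHom (d : ℤ) T), ker_inf,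
    map_inf_comap_eq_map_inf, map_smulHom_torsionSub hT d hm, card_torsionSub_addSubgroup,
    hT _ (Nat.gcd_pos_of_pos_right d hm)]

theorem finite_comap_smulHom
    (hT : ∀ m : ℕ, 0 < m → Nat.card (torsionSub (m : ℤ) T) = m ^ r)
    (S : AddSubgroup T) [Finite S] {d : ℕ} (hd : 0 < d) :
    Finite (S.comap (smulHom (d : ℤ) T)) := by
  have hle : S.comap (smulHom (d : ℤ) T) ≤ torsionSub ((d * Nat.card S : ℕ) : ℤ) T := by
    intro t ht
    rw [AddSubgroup.mem_comap, smulHom_natCast_apply] at ht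
    rw [mem_torsionSub_natCast, mul_nsmul]
    exact congrArg Subtype.val (card_nsmul_eq_zero' (x := (⟨d • t, ht⟩ : S)))
  have card_pos : 0 < d * Nat.card S := Nat.mul_pos hd Nat.card_pos
  have : Finite (torsionSub ((d * Nat.card S : ℕ) : ℤ) T) :=
    Nat.finite_of_card_ne_zero (by rw [hT _ card_pos]; positivity)
  exact .of_injective _ (AddSubgroup.inclusion_injective hle)

end Comap

theorem gcd_mul_left_eq_gcd_mul_gcd_div (d n m : ℕ) :
    (d * n).gcd m = d.gcd m * n.gcd (m / d.gcd m) := by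
  rw [← Nat.gcd_mul_left, Nat.mul_div_cancel' (Nat.gcd_dvd_right d m), ← Nat.gcd_mul_right,
    Nat.gcd_assoc, Nat.gcd_mul_right_left]

theorem preimage_under_smul_iso_general {T : Type*} [AddCommGroup T] {r s : ℕ}
    (htor : ∀ m : ℕ, 0 < m → Nonempty (torsionSub (m : ℤ) T ≃+ (Fin (r + s) → ZMod m)))
    {n d : ℕ} (hn : 1 ≤ n) (hd : 1 ≤ d)
    (S : AddSubgroup T) (hS : Nonempty (S ≃+ (Fin r → ZMod n))) :
    Nonempty (S.comap (smulHom (d : ℤ) T) ≃+ (Fin r → ZMod (d * n)) × (Fin s → ZMod d)) := by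
  obtain ⟨e⟩ := hS
  have hT (m : ℕ) (hm : 0 < m) : Nat.card (torsionSub (m : ℤ) T) = m ^ (r + s) :=
    (htor m hm).elim card_torsionSub_eq_pow
  have : NeZero n := .of_pos hn
  have : NeZero d := .of_pos hd
  have : Finite S := .of_equiv _ e.symm.toEquiv
  have : Finite (S.comap (smulHom (d : ℤ) T)) := finite_comap_smulHom hT S hd
  refine nonempty_addEquiv_of_card_torsionSub_eq fun m hm => ?_
  calc
    Nat.card (torsionSub (m : ℤ) (S.comap (smulHom (d : ℤ) T)))
      = d.gcd m ^ (r + s) * n.gcd (m / d.gcd m) ^ r := by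
        rw [card_torsionSub_comap_smulHom hT S d hm, card_torsionSub_congr e,
          card_torsionSub_pi_zmod, Fintype.card_fin]
    _ = (d * n).gcd m ^ r * d.gcd m ^ s := by
        rw [gcd_mul_left_eq_gcd_mul_gcd_div, mul_pow, pow_add, mul_right_comm]
    _ = Nat.card (torsionSub (m : ℤ) ((Fin r → ZMod (d * n)) × (Fin s → ZMod d))) := by
        rw [card_torsionSub_prod, card_torsionSub_pi_zmod, card_torsionSub_pi_zmod,
          Fintype.card_fin, Fintype.card_fin]

/-- Corollary 3.7 (group-theoretic content): the preimage of `G₀ ≅ (ℤ/nℤ)⁴` under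
multiplication by `d` on a divisible group `T` with `T[m] ≅ (ℤ/mℤ)⁸` for all `m` is
isomorphic to `(ℤ/dnℤ)⁴ × (ℤ/dℤ)⁴`. -/
theorem preimage_under_smul_iso
    (T : Type*) [AddCommGroup T]
    (hdiv : ∀ m : ℕ, 0 < m → ∀ t : T, ∃ u : T, m • u = t)
    (htor : ∀ m : ℕ, 0 < m → Nonempty (torsionSub (m : ℤ) T ≃+ (Fin 8 → ZMod m)))
    (n d : ℕ) (hn : 1 ≤ n) (hd : 1 ≤ d)
    (G₀ : AddSubgroup T) (hG₀ : Nonempty (G₀ ≃+ (Fin 4 → ZMod n))) :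
    Nonempty (↥(AddSubgroup.comap (smulHom (d : ℤ) T) G₀) ≃+
      ((Fin 4 → ZMod (d * n)) × (Fin 4 → ZMod d))) :=
  preimage_under_smul_iso_general htor hn hd G₀ hG₀
end
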